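/- arXiv:2411.19201 — 2 statements merged into one kernel-verified Lean document; each statement's English description precedes it below -/
import Mathlib

section
/- Let M be a multiset of points in AG(2,q), with q = p^h and p prime. Then the number of mod-special directions of M is either 0 or at least p^{h−1} + 2 (that is, q/p + 2). -/
/-!
The proof works with the power sums `powSum M d k = ∑_{P ∈ M} (L_d P) ^ k`, where `L_d P` is the
parameter of the line with slope `d` through `P`.

Writing the indicator of `L_d P = b` as `1 - (L_d P - b) ^ (q - 1)` and expanding in `b` shows
that `d` is mod-equidistributed iff `powSum M d k = 0` for all `k < q - 1`
(`powSum_eq_zero`, `not_isModSpecial`).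

For fixed `k`, the map `d ↦ powSum M d k` is a form of degree `k` on the projective line
`F ∪ {∞}`, so it vanishes identically once it has more than `k` zeros (`powSum_vanish`). With at
most `q / p + 1` mod-special directions there are at least `q - q / p` zeros, which settles all
`k < q - q / p`.

Finally `powSum M d k ^ (p ^ j) = powSum M d (k * p ^ j)`, and the exponent matters only modulo
`q - 1`: multiplication by `p` is a cyclic shift of the base-`p` digits of `k`. If `k < q - 1`, some
digit differs from `p - 1`; shifting it to the top yields an exponent below `q - q / p`
(`exists_shift`). Hence all power sums with `k < q - 1` vanish and no direction is mod-special.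
-/

attribute [local instance] Classical.propDecidable

noncomputable section

open Polynomial

variable {F : Type} [Field F]

/-- Point `P` of `AG(2,q)` lies on the line with slope `d` (`none` stands for slope `∞`)
and parameter `b`. -/
def onAffLine (d : Option F) (b : F) (P : F × F) : Prop :=
  match d with
  | some m => P.2 = m * P.1 + b
  | none => P.1 + b = 0

/-- Number of points of the multiset `M` (counted with multiplicity) on the line with
slope `d` and parameter `b`. -/
def lineCount (M : Multiset (F × F)) (d : Option F) (b : F) : ℕ :=
  Multiset.countP (onAffLine d b) M

/-- `d` is a mod-special direction of `M` (w.r.t. the prime `p`). -/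
def IsModSpecial (p : ℕ) (M : Multiset (F × F)) (d : Option F) : Prop :=
  ¬ ∀ b₁ b₂ : F, (lineCount M d b₁ : ZMod p) = (lineCount M d b₂ : ZMod p)

/-- `d` is a special direction of `M`: some line with slope `d` contains neither
`⌊|M|/q⌋` nor `⌈|M|/q⌉` points of `M`. -/
def IsSpecial [Fintype F] (M : Multiset (F × F)) (d : Option F) : Prop :=
  ¬ ∀ b : F, lineCount M d b = Multiset.card M / Fintype.card F ∨
      lineCount M d b = (Multiset.card M + Fintype.card F - 1) / Fintype.card F

/-- The multiset of the `q` points of an affine line, each with multiplicity one. -/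
def affLine [Fintype F] (d : Option F) (b : F) : Multiset (F × F) :=
  (Finset.univ.filter (onAffLine d b)).val

/-- The projection function of `M` from direction `d`: the unique polynomial of degree
at most `q - 1` whose value at each `b` is the number of points of `M` on the
corresponding line reduced modulo `p` (viewed in the prime subfield of `F`). -/
def prPoly [Fintype F] (M : Multiset (F × F)) (d : Option F) : F[X] :=
  Lagrange.interpolate Finset.univ id (fun b => (lineCount M d b : F))

/-- The parameter `b` of the unique line with slope `d` through `P`. -/
def lineParam (d : Option F) (P : F × F) : F :=
  match d with
  | some m => P.2 - m * P.1
  | none => -P.1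

/-- The `k`-th power sum of the line parameters of the points of `M` in direction `d`. -/
def powSum (M : Multiset (F × F)) (d : Option F) (k : ℕ) : F :=
  (M.map (fun P => lineParam d P ^ k)).sum

lemma onAffLine_iff (d : Option F) (b : F) (P : F × F) :
    onAffLine d b P ↔ lineParam d P = b := by
  cases d with
  | none =>
    simp only [onAffLine, lineParam]
    constructor <;> intro h <;> linear_combination -h
  | some m =>
    simp only [onAffLine, lineParam]
    constructor <;> intro h <;> linear_combination h

lemma lineCount_cast (M : Multiset (F × F)) (d : Option F) (b : F) :
    (lineCount M d b : F) = (M.map (fun P => if lineParam d P = b then (1 : F) else 0)).sum := by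
  induction M using Multiset.induction_on with
  | empty => simp [lineCount]
  | cons P M ih =>
    simp only [Multiset.map_cons, Multiset.sum_cons, ← ih]
    simp only [lineCount, Multiset.countP_cons, onAffLine_iff]
    split_ifs <;> simp [add_comm]

lemma powSum_eq_sum_lineCount [Fintype F] (M : Multiset (F × F)) (d : Option F) (k : ℕ) :
    powSum M d k = ∑ b : F, (lineCount M d b : F) * b ^ k := by
  simp only [lineCount_cast]
  induction M using Multiset.induction_on with
  | empty => simp [powSum]
  | cons P M ih =>
    simp only [powSum, Multiset.map_cons, Multiset.sum_cons, add_mul, Finset.sum_add_distrib] at *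
    rw [ih]
    simp

/-- In a mod-equidistributed direction the low power sums vanish, being multiples of
`∑ b, b ^ k`. -/
lemma powSum_eq_zero [Fintype F] (p : ℕ) [CharP F p] (M : Multiset (F × F)) (d : Option F)
    (hd : ¬ IsModSpecial p M d) (k : ℕ) (hk : k < Fintype.card F - 1) : powSum M d k = 0 := by
  have hd' : ∀ b₁ b₂ : F, (lineCount M d b₁ : ZMod p) = (lineCount M d b₂ : ZMod p) := by
    simpa only [IsModSpecial, not_not] using hd
  have h0 : ∀ b : F, (lineCount M d b : F) = (lineCount M d 0 : F) := by
    intro b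
    rw [CharP.natCast_eq_natCast F p, ← ZMod.natCast_eq_natCast_iff]
    exact hd' b 0
  rw [powSum_eq_sum_lineCount]
  simp only [h0]
  rw [← Finset.mul_sum, FiniteField.sum_pow_lt_card_sub_one F k hk, mul_zero]

lemma indicator_eq [Fintype F] (a b : F) :
    (if a = b then (1 : F) else 0) = 1 - (a + -b) ^ (Fintype.card F - 1) := by
  have hq : 1 < Fintype.card F := Fintype.one_lt_card
  split_ifs with h
  · rw [h, add_neg_cancel, zero_pow (by omega), sub_zero]
  · rw [FiniteField.pow_card_sub_one_eq_one _ (by rwa [← sub_eq_add_neg, sub_ne_zero]), sub_self]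

lemma lineCount_eq_powSum [Fintype F] (M : Multiset (F × F)) (d : Option F) (b : F) :
    (lineCount M d b : F) = powSum M d 0 - ∑ k ∈ Finset.range (Fintype.card F - 1 + 1),
      powSum M d k * ((-b) ^ (Fintype.card F - 1 - k) * ((Fintype.card F - 1).choose k : F)) := by
  rw [lineCount_cast]
  induction M using Multiset.induction_on with
  | empty => simp [powSum]
  | cons P M ih =>
    simp only [powSum, Multiset.map_cons, Multiset.sum_cons, add_mul, Finset.sum_add_distrib] at *
    rw [ih, indicator_eq, add_pow]
    simp only [mul_assoc, pow_zero]
    ring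

/-- If the low power sums vanish, only the top one contributes to the line counts, and its
contribution does not depend on the line. -/
lemma not_isModSpecial [Fintype F] (p : ℕ) [CharP F p] (M : Multiset (F × F)) (d : Option F)
    (hd : ∀ k < Fintype.card F - 1, powSum M d k = 0) : ¬ IsModSpecial p M d := by
  have key : ∀ b : F, (lineCount M d b : F) =
      powSum M d 0 - powSum M d (Fintype.card F - 1) := by
    intro b
    rw [lineCount_eq_powSum, Finset.sum_range_succ, Finset.sum_eq_zero]
    · simp
    · intro k hk
      rw [hd k (Finset.mem_range.1 hk), zero_mul]
  unfold IsModSpecial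
  rw [not_not]
  intro b₁ b₂
  rw [ZMod.natCast_eq_natCast_iff, ← CharP.natCast_eq_natCast F p, key, key]

/-- The polynomial in the slope whose values are the `k`-th power sums; its coefficient of degree
`k` is the power sum in direction `∞`. -/
def slopePoly (M : Multiset (F × F)) (k : ℕ) : F[X] :=
  (M.map (fun P => (C (-P.1) * X + C P.2) ^ k)).sum

lemma slopePoly_eval (M : Multiset (F × F)) (k : ℕ) (m : F) :
    (slopePoly M k).eval m = powSum M (some m) k := by
  induction M using Multiset.induction_on with
  | empty => simp [powSum, slopePoly]
  | cons P M ih =>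
    simp only [powSum, slopePoly, Multiset.map_cons, Multiset.sum_cons, eval_add] at *
    rw [ih]
    simp only [lineParam, eval_pow, eval_add, eval_mul, eval_C, eval_X]
    congr 2
    ring

lemma slopePoly_natDegree (M : Multiset (F × F)) (k : ℕ) : (slopePoly M k).natDegree ≤ k := by
  induction M using Multiset.induction_on with
  | empty => simp [slopePoly]
  | cons P M ih =>
    simp only [slopePoly, Multiset.map_cons, Multiset.sum_cons] at *
    refine natDegree_add_le_of_degree_le ?_ ih
    refine (natDegree_pow_le_of_le k natDegree_linear_le).trans (by simp)

lemma slopePoly_coeff (M : Multiset (F × F)) (k : ℕ) :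
    (slopePoly M k).coeff k = powSum M none k := by
  induction M using Multiset.induction_on with
  | empty => simp [powSum, slopePoly]
  | cons P M ih =>
    simp only [powSum, slopePoly, Multiset.map_cons, Multiset.sum_cons, coeff_add] at *
    rw [ih]
    congr 1
    have := coeff_pow_of_natDegree_le (p := C (-P.1) * X + C P.2) (m := k)
      (natDegree_linear_le (a := -P.1) (b := P.2))
    rw [mul_one] at this
    rw [this]
    simp [lineParam]

/-- A form of degree `k` on the projective line with more than `k` zeros vanishes. -/
lemma powSum_vanish (M : Multiset (F × F)) (k : ℕ) (A : Finset (Option F))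
    (hA : ∀ d ∈ A, powSum M d k = 0) (hc : k < A.card) (d : Option F) : powSum M d k = 0 := by
  have hQ : slopePoly M k = 0 := by
    have hroot : ∀ m ∈ A.eraseNone, (slopePoly M k).eval m = 0 := by
      intro m hm
      rw [slopePoly_eval]
      exact hA _ (Finset.mem_eraseNone.1 hm)
    have hdeg := natDegree_le_iff_degree_le.1 (slopePoly_natDegree M k)
    refine Polynomial.eq_zero_of_degree_lt_of_eval_finset_eq_zero A.eraseNone ?_ hroot
    by_cases hn : none ∈ A
    · have hcard : A.eraseNone.card + 1 = A.card := by
        rw [Finset.card_eraseNone_of_mem hn]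
        omega
      -- A zero at infinity lowers the degree, which makes up for the lost affine zero.
      have hlt : (slopePoly M k).degree < k := by
        rw [Polynomial.degree_lt_iff_coeff_zero]
        intro m hm
        rcases hm.eq_or_lt with rfl | hm
        · rw [slopePoly_coeff, hA _ hn]
        · exact coeff_eq_zero_of_natDegree_lt ((slopePoly_natDegree M k).trans_lt hm)
      refine hlt.trans_le ?_
      exact_mod_cast (by omega : k ≤ A.eraseNone.card)
    · refine hdeg.trans_lt ?_
      rw [Finset.card_eraseNone_of_not_mem hn]
      exact_mod_cast hc
  cases d with
  | none => rw [← slopePoly_coeff, hQ, coeff_zero]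
  | some m => rw [← slopePoly_eval, hQ, eval_zero]

lemma powSum_pow (p : ℕ) [Fact p.Prime] [CharP F p] (M : Multiset (F × F)) (d : Option F)
    (k j : ℕ) : powSum M d k ^ p ^ j = powSum M d (k * p ^ j) := by
  have : ExpChar F p := ExpChar.prime Fact.out
  rw [← iterateFrobenius_def, powSum, map_multiset_sum, Multiset.map_map]
  simp only [powSum, Function.comp_def, iterateFrobenius_def, pow_mul]

lemma pow_reduce [Fintype F] (x : F) (n k : ℕ) (hk : 1 ≤ k) :
    x ^ ((Fintype.card F - 1) * n + k) = x ^ k := by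
  have hq : 1 < Fintype.card F := Fintype.one_lt_card
  induction n with
  | zero => simp
  | succ n ih =>
    have h1 : (Fintype.card F - 1) * (n + 1) + k =
        Fintype.card F + ((Fintype.card F - 1) * n + (k - 1)) := by
      rw [mul_add]
      omega
    have h2 : (Fintype.card F - 1) * n + k = 1 + ((Fintype.card F - 1) * n + (k - 1)) := by
      omega
    rw [h1, pow_add, FiniteField.pow_card, ← ih, h2, pow_add x 1, pow_one]

/-- With `q = p ^ (n + 1)`, any `1 ≤ k < q - 1` is congruent modulo `q - 1`, after multiplication
by a power of `p`, to some `1 ≤ k' < q - q / p`. -/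
lemma exists_shift (p n k : ℕ) (hp : p.Prime) (hk : 1 ≤ k) (hk2 : k < p ^ (n + 1) - 1) :
    ∃ j k' i, 1 ≤ k' ∧ k' + p ^ n < p ^ (n + 1) ∧ k * p ^ j = (p ^ (n + 1) - 1) * i + k' := by
  -- The complement `t` of `k` is multiplied by `p` for as long as it stays below `q`.
  obtain ⟨t, ht⟩ : ∃ t, k + t = p ^ (n + 1) - 1 := ⟨_, Nat.add_sub_of_le hk2.le⟩
  have ht0 : 1 ≤ t := by omega
  have hex : ∃ j, p ^ (n + 1) ≤ t * p ^ (j + 1) :=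
    ⟨n, Nat.le_mul_of_pos_left _ ht0⟩
  classical
  let j := Nat.find hex
  have hj : p ^ (n + 1) ≤ t * p ^ (j + 1) := Nat.find_spec hex
  have hT1 : t * p ^ j < p ^ (n + 1) := by
    rcases Nat.eq_zero_or_pos j with h0 | h0
    · rw [h0, pow_zero, mul_one]
      omega
    · have := Nat.find_min hex (m := j - 1) (by change j - 1 < j; omega)
      rw [Nat.sub_add_cancel h0] at this
      omega
  have hT2 : p ^ n ≤ t * p ^ j := by
    rw [pow_succ, pow_succ, ← mul_assoc] at hj
    exact Nat.le_of_mul_le_mul_right hj hp.pos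
  have hT3 : t * p ^ j ≠ p ^ (n + 1) - 1 := by
    intro h
    rcases Nat.eq_zero_or_pos j with h0 | h0
    · rw [h0, pow_zero, mul_one] at h
      omega
    · have h1 : p ∣ t * p ^ j := dvd_mul_of_dvd_right (dvd_pow_self p (by omega)) t
      have h2 : p ∣ p ^ (n + 1) := dvd_pow_self p (by omega)
      have h3 : p ^ (n + 1) = t * p ^ j + 1 := by omega
      rw [h3] at h2
      exact hp.one_lt.ne' (Nat.dvd_one.1 ((Nat.dvd_add_right h1).1 h2))
  have hpj : 1 ≤ p ^ j := Nat.one_le_pow _ _ hp.pos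
  have hpn : 1 ≤ p ^ n := Nat.one_le_pow _ _ hp.pos
  refine ⟨j, p ^ (n + 1) - 1 - t * p ^ j, p ^ j - 1, by omega, by omega, ?_⟩
  have e1 : k * p ^ j + t * p ^ j = (p ^ (n + 1) - 1) * p ^ j := by rw [← add_mul, ht]
  have e2 : (p ^ (n + 1) - 1) * (p ^ j - 1) + (p ^ (n + 1) - 1) = (p ^ (n + 1) - 1) * p ^ j := by
    rw [← Nat.mul_succ, Nat.succ_eq_add_one, Nat.sub_add_cancel hpj]
  omega

theorem stmt1 (p h : ℕ) [Fact p.Prime] (hh : 1 ≤ h)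
    (F : Type) [Field F] [Fintype F] [CharP F p] (hcard : Fintype.card F = p ^ h)
    (M : Multiset (F × F)) :
    (Finset.univ.filter (fun d : Option F => IsModSpecial p M d)).card = 0 ∨
      p ^ (h - 1) + 2 ≤ (Finset.univ.filter (fun d : Option F => IsModSpecial p M d)).card := by
  rw [or_iff_not_imp_right, not_le]
  intro hlt
  have hp : p.Prime := Fact.out
  obtain ⟨n, rfl⟩ : ∃ n, h = n + 1 := ⟨h - 1, by omega⟩
  rw [Nat.add_sub_cancel] at hlt
  have hsum := Finset.card_filter_add_card_filter_not (s := (Finset.univ : Finset (Option F)))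
    (fun d : Option F => IsModSpecial p M d)
  rw [Finset.card_univ, Fintype.card_option, hcard] at hsum
  have hpn : 2 * p ^ n ≤ p ^ (n + 1) := by
    rw [pow_succ, mul_comm]
    exact Nat.mul_le_mul_left _ hp.two_le
  have hpn1 : 1 ≤ p ^ n := Nat.one_le_pow _ _ hp.pos
  have hsmall : ∀ k, k + p ^ n < p ^ (n + 1) → ∀ d, powSum M d k = 0 := by
    intro k hk d
    refine powSum_vanish M k (Finset.univ.filter (fun d : Option F => ¬ IsModSpecial p M d))
      ?_ (by omega) d
    intro d hd
    exact powSum_eq_zero p M d (Finset.mem_filter.1 hd).2 k (by omega)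
  rw [Finset.card_eq_zero, Finset.filter_eq_empty_iff]
  intro d _
  refine not_isModSpecial p M d ?_
  intro k hk
  rw [hcard] at hk
  rcases Nat.eq_zero_or_pos k with rfl | hk0
  · exact hsmall 0 (by omega) d
  · obtain ⟨j, k', i, h1, h2, h3⟩ := exists_shift p n k hp hk0 hk
    have h4 : powSum M d (k * p ^ j) = powSum M d k' := by
      rw [h3, ← hcard]
      simp only [powSum, pow_reduce _ i k' h1]
    have h5 : powSum M d k ^ p ^ j = 0 := by rw [powSum_pow, h4, hsmall k' h2 d]
    exact eq_zero_of_pow_eq_zero h5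

end
end

section
/- Let M be a minimal weighted n-fold blocking set of Rédei type in PG(2,q), q = p^h with p prime, h > 1, and n < q, and let ℓ be a Rédei line of M. If the number of distinct points of ℓ lying in the support of M is less than p/n + 1 (i.e., n times that number is at most p), then M is the union of n (not necessarily distinct) lines; that is, M equals, as a multiset, a sum of n multisets each consisting of all q+1 points of a line of PG(2,q) with multiplicity one. -/
/-!
Write `q` for the size of the field, call the points off the Rédei line `l` affine, and let
`w` be the multiplicity function of `M`.

*Line weights modulo `p`.* Through a point of `l` outside `M` all `q` lines other than `l` contain
at least `n` of the `n q` affine points, hence exactly `n`. At most `p` points of `l` are exceptions.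
The number of affine points on the line `m + c l` is, in `F`, the value at `c` of a polynomial
`∑ (1 - (X + a) ^ (q - 1))`, and the coefficients of `X ^ j` are polynomials of degree at most
`q - 1 - j` in the slope of `m`, with at least `q - p` zeros if `j > 0`. So for every slope the
degree is below `p`. A polynomial of degree below `p` with values in the prime field is constant when
`q ≥ p ^ 2`, so the number of affine points on a line is determined modulo `p` by its point on `l`
(`cnt_modEq`, `meet_modEq`).

*All line weights are `n` modulo `p`, and `l` has weight `n`.* For `n < p` this follows from a count
of the lines through an affine point, the bound on the number of points of `M` on `l` and the
minimality of `M` (`redei_modEq`). Otherwise `n = p` and `M` has a single point on `l`, where a direct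
count suffices (`redei_single`).

*Conclusion.* Now `M` has `n (q + 1)` points, so the lines through a point outside `M` have average
weight `n` and hence weight exactly `n`. A line of weight above `n` therefore lies in the support of
`M`. Removing it gives a multiset of the same kind for `n - 1`, the congruence modulo `p` ensuring
that the removed line still has weight at least `n - 1` (`sum_of_lines`).
-/

attribute [local instance] Classical.propDecidable

noncomputable section

/-- Points of `PG(2,q)`: 1-dimensional subspaces of `F³`. -/
abbrev PGPoint (F : Type) [Field F] := Projectivization F (Fin 3 → F)

instance (F : Type) [Field F] [Fintype F] : Finite (PGPoint F) := Quotient.finite _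

variable {F : Type} [Field F]

/-- Incidence between a line with dual coordinates `l` and a point `P` of `PG(2,q)`. -/
def PGIncident (l P : PGPoint F) : Prop := ∑ i, l.rep i * P.rep i = 0

/-- The number of points of the multiset `M`, counted with multiplicity, on the line `l`. -/
def lineMeets (M : Multiset (PGPoint F)) (l : PGPoint F) : ℕ :=
  Multiset.countP (PGIncident l) M

/-- The multiset of all points of the line `l`, each with multiplicity one. -/
def pgLinePts [Fintype F] (l : PGPoint F) : Multiset (PGPoint F) :=
  (Set.toFinite {P | PGIncident l P}).toFinset.val

/-- The characteristic function (with values in `𝔽_p`) of the line `l`. -/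
def chi (p : ℕ) (l : PGPoint F) : PGPoint F → ZMod p :=
  fun P => if PGIncident l P then 1 else 0

/-- The code `C(2,q)`: the `𝔽_p`-linear span of the characteristic functions of lines. -/
def code (p : ℕ) (F : Type) [Field F] : Submodule (ZMod p) (PGPoint F → ZMod p) :=
  Submodule.span (ZMod p) (Set.range (chi p))

/-! ### The polynomial argument -/

open Polynomial in
/-- Evaluated at `c`, the polynomial `∑ W i (1 - (X + u i) ^ (q - 1))` counts, as an element of `F`,
the indices `i` with `u i = -c`, with weights `W`. -/
theorem redeiPoly_eval [Fintype F] {ι : Type*} [Fintype ι] (W : ι → ℕ) (u : ι → F) (c : F) :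
    (∑ i, C (W i : F) * (1 - (X + C (u i)) ^ (Fintype.card F - 1))).eval c
      = ((∑ i, if u i + c = 0 then W i else 0 : ℕ) : F) := by
  rw [eval_finsetSum, Nat.cast_sum]
  refine Finset.sum_congr rfl fun i _ => ?_
  have hq : Fintype.card F - 1 ≠ 0 := by
    have := Fintype.one_lt_card (α := F); omega
  simp only [eval_mul, eval_C, eval_sub, eval_one, eval_pow, eval_add, eval_X]
  split_ifs with hc
  · rw [add_comm c, hc, zero_pow hq]; simp
  · rw [add_comm c, FiniteField.pow_card_sub_one_eq_one _ hc]; simp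

open Polynomial in
theorem redeiPoly_natDegree_lt [Fintype F] {ι : Type*} [Fintype ι] (W : ι → ℕ) (u : ι → F) :
    (∑ i, C (W i : F) * (1 - (X + C (u i)) ^ (Fintype.card F - 1))).natDegree
      < Fintype.card F := by
  have h1 := Fintype.one_lt_card (α := F)
  refine lt_of_le_of_lt (natDegree_sum_le_of_forall_le (n := Fintype.card F - 1) _ _ fun i _ => ?_)
    (by omega)
  refine (natDegree_C_mul_le _ _).trans ((natDegree_sub_le _ _).trans ?_)
  simp [natDegree_pow]

open Polynomial in
theorem redeiPoly_coeff [Fintype F] {ι : Type*} [Fintype ι] (W : ι → ℕ) (u : ι → F) (j : ℕ)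
    (hj : j ≠ 0) :
    (∑ i, C (W i : F) * (1 - (X + C (u i)) ^ (Fintype.card F - 1))).coeff j
      = ∑ i, (W i : F) * (-(u i ^ (Fintype.card F - 1 - j) * ((Fintype.card F - 1).choose j : F))) := by
  rw [finsetSum_coeff]
  refine Finset.sum_congr rfl fun i _ => ?_
  rw [coeff_C_mul, coeff_sub, coeff_X_add_C_pow, coeff_one, if_neg hj, zero_sub]

open Polynomial in
/-- Think of `i` as an affine point with coordinates `(a i, b i)` and weight `W i`. If all but at
most `p` of the slopes `t` have only lines of weight `n`, then the weights of all lines of slope `0`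
agree modulo `p`.

The weight of the line of slope `t` and parameter `c` is the value at `c` of a polynomial whose
`j`-th coefficient is a polynomial of degree at most `q - 1 - j` in `t`. For `j ≥ p` it has too many
zeros, so the polynomial for slope `0` has degree below `p`; having values in the prime field, it is
constant. -/
theorem cnt_modEq (p h n : ℕ) [Fact p.Prime] (hh : 1 < h) [Fintype F] [CharP F p]
    (hcard : Fintype.card F = p ^ h) {ι : Type*} [Fintype ι] (W : ι → ℕ) (a b : ι → F)
    (bad : Finset F) (hbad : bad.card ≤ p)
    (hgood : ∀ t ∉ bad, ∀ c, (∑ i, if a i + t * b i + c = 0 then W i else 0) = n) (c c' : F) :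
    (∑ i, if a i + c = 0 then W i else 0) ≡ (∑ i, if a i + c' = 0 then W i else 0) [MOD p] := by
  have hp : p.Prime := Fact.out
  have hq : p * (p - 1) < Fintype.card F := by
    have h2 : p ^ 2 ≤ p ^ h := Nat.pow_le_pow_right hp.pos hh
    have : p * (p - 1) < p * p := by
      have := hp.pos
      exact Nat.mul_lt_mul_of_pos_left (by omega) this
    rw [hcard]; nlinarith
  set q := Fintype.card F with hqdef
  set g : F[X] := ∑ i, C (W i : F) * (1 - (X + C (a i)) ^ (q - 1)) with hg
  have hcoeff : ∀ j, p ≤ j → g.coeff j = 0 := by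
    intro j hj
    have hj0 : j ≠ 0 := by have := hp.pos; omega
    by_cases hjq : q ≤ j
    · exact coeff_eq_zero_of_natDegree_lt ((redeiPoly_natDegree_lt W a).trans_le hjq)
    set G : F[X] := ∑ i, C (W i : F) *
      (-((C (a i) + X * C (b i)) ^ (q - 1 - j) * C ((q - 1).choose j : F))) with hG
    have hGe : ∀ t, G.eval t = (∑ i, C (W i : F) *
        (1 - (X + C (a i + t * b i)) ^ (q - 1))).coeff j := by
      intro t
      rw [redeiPoly_coeff W (fun i => a i + t * b i) j hj0, hG, eval_finsetSum]
      simp [hqdef, mul_comm t]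
    have hGd : G.natDegree ≤ q - 1 - j := by
      refine natDegree_sum_le_of_forall_le _ _ fun i _ => ?_
      refine (natDegree_C_mul_le _ _).trans ?_
      rw [natDegree_neg]
      refine (natDegree_mul_C_le _ _).trans ?_
      refine natDegree_pow_le.trans ?_
      have : (C (a i) + X * C (b i)).natDegree ≤ 1 := by compute_degree
      nlinarith
    have hG0 : G = 0 := by
      refine eq_zero_of_natDegree_lt_card_of_eval_eq_zero' G badᶜ ?_ ?_
      · intro t ht
        rw [hGe t]
        have hconst : (∑ i, C (W i : F) * (1 - (X + C (a i + t * b i)) ^ (q - 1))) = C (n : F) := by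
          rw [← sub_eq_zero]
          refine eq_zero_of_natDegree_lt_card_of_eval_eq_zero' _ Finset.univ ?_ ?_
          · intro c _
            rw [eval_sub, redeiPoly_eval W (fun i => a i + t * b i),
              hgood t (by simpa using ht) c, eval_C, sub_self]
          · rw [natDegree_sub_C]
            exact redeiPoly_natDegree_lt W (fun i => a i + t * b i)
        rw [hconst, coeff_C_of_ne_zero hj0]
      · rw [Finset.card_compl]
        omega
    -- `g` is the polynomial for slope `0`
    have := hGe 0
    rw [hG0] at this
    simpa [hg] using this.symm
  have hdeg : g.natDegree ≤ p - 1 := by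
    rw [natDegree_le_iff_coeff_eq_zero]
    intro j hj
    exact hcoeff j (by omega)
  have heval : ∀ x, g.eval x = ((∑ i, if a i + x = 0 then W i else 0 : ℕ) : F) :=
    fun x => redeiPoly_eval W a x
  -- `g` takes values in the prime field and has degree below `q / p`, so `g ^ p = g`
  have hpow : g ^ p - g = 0 := by
    refine eq_zero_of_natDegree_lt_card_of_eval_eq_zero' _ Finset.univ ?_ ?_
    · intro x _
      have : ExpChar F p := ExpChar.prime hp
      rw [eval_sub, eval_pow, heval, ← frobenius_def, map_natCast, sub_self]
    · refine lt_of_le_of_lt (natDegree_sub_le _ _) ?_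
      rw [natDegree_pow, Finset.card_univ]
      have h1 : p * g.natDegree ≤ p * (p - 1) := Nat.mul_le_mul_left _ hdeg
      have h2 : g.natDegree ≤ p * g.natDegree := Nat.le_mul_of_pos_left _ hp.pos
      exact max_lt (by omega) (by omega)
  have hd0 : g.natDegree = 0 := by
    have := congrArg natDegree (sub_eq_zero.1 hpow)
    rw [natDegree_pow] at this
    have := hp.two_le
    nlinarith
  rw [← CharP.natCast_eq_natCast F p, ← heval, ← heval, eq_C_of_natDegree_eq_zero hd0]
  simp

/-! ### Counting in `PG(2,q)` -/

instance instFintypePGPoint [Fintype F] : Fintype (PGPoint F) := Fintype.ofFinite _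

theorem PGIncident_iff_mem (l P : PGPoint F) : PGIncident l P ↔ P ∈ l := by
  rw [Configuration.ofField.mem_iff]
  conv_rhs => rw [← P.mk_rep, ← l.mk_rep]
  rw [Projectivization.orthogonal_mk, dotProduct_comm]
  rfl

theorem PGIncident_mk (v : Fin 3 → F) (hv : v ≠ 0) (P : PGPoint F) :
    PGIncident (Projectivization.mk F v hv) P ↔ v ⬝ᵥ P.rep = 0 := by
  rw [PGIncident_iff_mem, Configuration.ofField.mem_iff]
  conv_lhs => rw [← P.mk_rep]
  rw [Projectivization.orthogonal_mk, dotProduct_comm]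

theorem PGIncident_iff_dot (l P : PGPoint F) : PGIncident l P ↔ l.rep ⬝ᵥ P.rep = 0 := Iff.rfl

theorem eq_or_eq_of_inc {l m P Q : PGPoint F} (h1 : PGIncident l P) (h2 : PGIncident l Q)
    (h3 : PGIncident m P) (h4 : PGIncident m Q) : P = Q ∨ l = m := by
  rw [PGIncident_iff_mem] at *
  exact Configuration.Nondegenerate.eq_or_eq h1 h2 h3 h4

theorem order_eq [Fintype F] :
    Configuration.ProjectivePlane.order (PGPoint F) (PGPoint F) = Fintype.card F := by
  have h1 := Configuration.ProjectivePlane.card_points (PGPoint F) (PGPoint F)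
  have h2 := Projectivization.card_of_finrank F (Fin 3 → F) (n := 3) (by simp)
  rw [Nat.card_eq_fintype_card, Nat.card_eq_fintype_card] at h2
  simp only [Finset.sum_range_succ, Finset.sum_range_zero] at h2
  set o := Configuration.ProjectivePlane.order (PGPoint F) (PGPoint F)
  have h3 := h1.symm.trans h2
  rcases lt_trichotomy o (Fintype.card F) with h | h | h
  · nlinarith
  · exact h
  · nlinarith

theorem card_points_on [Fintype F] (l : PGPoint F) :
    (Finset.univ.filter fun P => PGIncident l P).card = Fintype.card F + 1 := by
  have := Configuration.ProjectivePlane.pointCount_eq (P := PGPoint F) l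
  rw [order_eq, Configuration.pointCount, Nat.card_eq_fintype_card, Fintype.card_subtype] at this
  rw [← this]
  congr 1
  ext P
  simp [PGIncident_iff_mem]

theorem card_lines_through [Fintype F] (P : PGPoint F) :
    (Finset.univ.filter fun l => PGIncident l P).card = Fintype.card F + 1 := by
  rw [← card_points_on P]
  congr 1
  ext l
  simp only [Finset.mem_filter, PGIncident_iff_dot, dotProduct_comm]

theorem exists_point [Fintype F] (l m : PGPoint F) : ∃ P, PGIncident l P ∧ PGIncident m P := by
  by_cases hlm : l = m
  · subst hlm
    obtain ⟨P, hP⟩ := Finset.card_pos.1 ((Nat.succ_pos _).trans_eq (card_points_on l).symm)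
    have hP : PGIncident l P := by simpa using hP
    exact ⟨P, hP, hP⟩
  · simp only [PGIncident_iff_mem]
    exact ⟨_, Configuration.HasPoints.mkPoint_ax (P := PGPoint F) hlm⟩

theorem exists_line [Fintype F] (P Q : PGPoint F) : ∃ l, PGIncident l P ∧ PGIncident l Q := by
  obtain ⟨l, h1, h2⟩ := exists_point P Q
  refine ⟨l, ?_, ?_⟩
  · rw [PGIncident_iff_dot, dotProduct_comm]; exact h1
  · rw [PGIncident_iff_dot, dotProduct_comm]; exact h2

/-- The total weight on the line `l` of a weight function `w` on the points. -/
def meet [Fintype F] (w : PGPoint F → ℕ) (l : PGPoint F) : ℕ :=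
  ∑ P with PGIncident l P, w P

/-- Each point other than `P` lies on exactly one line through `P`, and `P` on all `q + 1`. -/
theorem sum_meet [Fintype F] (w : PGPoint F → ℕ) (P : PGPoint F) :
    ∑ m with PGIncident m P, meet w m = ∑ Q, w Q + Fintype.card F * w P := by
  have h1 : ∀ Q, (∑ m with PGIncident m P, if PGIncident m Q then w Q else 0) =
      w Q + if Q = P then Fintype.card F * w P else 0 := by
    intro Q
    rw [← Finset.sum_filter, Finset.sum_const, smul_eq_mul, Finset.filter_filter]
    split_ifs with h
    · subst h
      simp only [and_self]
      rw [card_lines_through]; ring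
    · obtain ⟨m, hP, hQ⟩ := exists_line P Q
      have : (Finset.univ.filter fun m => PGIncident m P ∧ PGIncident m Q) = {m} := by
        ext m'
        simp only [Finset.mem_filter, Finset.mem_univ, true_and, Finset.mem_singleton]
        constructor
        · rintro ⟨h1, h2⟩
          exact (eq_or_eq_of_inc h1 h2 hP hQ).resolve_left (Ne.symm h)
        · rintro rfl; exact ⟨hP, hQ⟩
      rw [this]; simp
  unfold meet
  simp_rw [Finset.sum_filter (fun Q => PGIncident _ Q)]
  rw [Finset.sum_comm, Finset.sum_congr rfl fun Q _ => h1 Q, Finset.sum_add_distrib]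
  simp

theorem meet_add [Fintype F] (w w' : PGPoint F → ℕ) (m : PGPoint F) :
    meet (fun P => w P + w' P) m = meet w m + meet w' m := Finset.sum_add_distrib

theorem inter_eq [Fintype F] {l m P : PGPoint F} (hlm : l ≠ m) (hl : PGIncident l P)
    (hm : PGIncident m P) (Q : PGPoint F) : (PGIncident m Q ∧ PGIncident l Q) ↔ Q = P := by
  constructor
  · rintro ⟨h1, h2⟩
    exact (eq_or_eq_of_inc h2 hl h1 hm).resolve_right hlm
  · rintro rfl; exact ⟨hm, hl⟩

/-- A weight function supported on `l` is seen by another line only at its point on `l`. -/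
theorem meet_supported [Fintype F] (d : PGPoint F → ℕ) {l m P : PGPoint F} (hlm : l ≠ m)
    (hl : PGIncident l P) (hm : PGIncident m P) (hd : ∀ Q, ¬ PGIncident l Q → d Q = 0) :
    meet d m = d P := by
  unfold meet
  refine Finset.sum_eq_single_of_mem P (by simpa using hm) ?_
  intro Q hQ hne
  apply hd
  intro h
  exact hne ((inter_eq hlm hl hm Q).1 ⟨by simpa using hQ, h⟩)

theorem exists_off_point [Fintype F] {l m : PGPoint F} (hlm : l ≠ m) :
    ∃ Q, PGIncident m Q ∧ ¬ PGIncident l Q := by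
  obtain ⟨P, hl, hm⟩ := exists_point l m
  by_contra hcon
  push Not at hcon
  have h1 : (Finset.univ.filter fun Q => PGIncident m Q) ⊆ {P} := by
    intro Q hQ
    have hQ : PGIncident m Q := by simpa using hQ
    simpa using (inter_eq hlm hl hm Q).1 ⟨hQ, hcon Q hQ⟩
  have h2 := Finset.card_le_card h1
  have := Fintype.card_pos (α := F)
  rw [card_points_on, Finset.card_singleton] at h2
  omega

/-! ### Minimal-size multisets with all line weights `n` modulo `p` -/

theorem count_pgLinePts [Fintype F] (m P : PGPoint F) :
    (pgLinePts m).count P = if PGIncident m P then 1 else 0 := by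
  unfold pgLinePts
  rw [Multiset.count_eq_of_nodup (Finset.nodup _)]
  simp

/-- An `n`-fold blocking multiset of the least possible size `n (q + 1)` whose line intersections
are all congruent to `n` modulo some `p ≥ n` dividing `q` is a sum of `n` lines. The induction
removes a line of weight above `n`: such a line lies in the support, because the lines through a
point of weight zero have average weight exactly `n`. -/
theorem sum_of_lines [Fintype F] (p : ℕ) (hpq : p ∣ Fintype.card F) (n : ℕ) :
    n ≤ p → ∀ w : PGPoint F → ℕ, ∑ P, w P = n * (Fintype.card F + 1) →
    (∀ m, n ≤ meet w m) → (∀ m, meet w m ≡ n [MOD p]) →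
    ∃ L : Multiset (PGPoint F), Multiset.card L = n ∧
      ∀ P, w P = (L.map pgLinePts).sum.count P := by
  induction n with
  | zero =>
    intro _ w hw _ _
    refine ⟨0, rfl, fun P => ?_⟩
    rw [zero_mul, Finset.sum_eq_zero_iff] at hw
    simpa using hw P
  | succ n ih =>
    intro hnp w hw hge hmod
    obtain ⟨Q, hQ⟩ : ∃ Q, 0 < w Q := by
      by_contra hcon
      push Not at hcon
      rw [Finset.sum_eq_zero (fun P _ => Nat.le_zero.1 (hcon P))] at hw
      have := Nat.mul_pos (Nat.succ_pos n) (Nat.succ_pos (Fintype.card F))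
      exact this.ne hw
    have hq := Fintype.card_pos (α := F)
    obtain ⟨m, hmQ, hm⟩ : ∃ m, PGIncident m Q ∧ n + 1 < meet w m := by
      by_contra hcon
      push Not at hcon
      have h1 := sum_meet w Q
      have h2 : ∑ m with PGIncident m Q, meet w m ≤ ∑ m with PGIncident m Q, (n + 1) :=
        Finset.sum_le_sum fun m hm => hcon m (by simpa using hm)
      rw [Finset.sum_const, card_lines_through, smul_eq_mul] at h2
      have := Nat.mul_pos hq hQ
      nlinarith
    -- a line meeting `w` in more than `n + 1` points contains no point of weight zero
    have hpos : ∀ R, PGIncident m R → 0 < w R := by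
      intro R hR
      by_contra hcon
      have hR0 : w R = 0 := by omega
      have h1 := sum_meet w R
      have h2 : ∑ m with PGIncident m R, (n + 1) < ∑ m with PGIncident m R, meet w m :=
        Finset.sum_lt_sum (fun m _ => hge m) ⟨m, by simpa using hR, hm⟩
      rw [Finset.sum_const, card_lines_through, smul_eq_mul] at h2
      rw [hR0] at h1
      nlinarith
    set w' : PGPoint F → ℕ := fun P => w P - if PGIncident m P then 1 else 0 with hw'
    set e : PGPoint F → ℕ := fun P => if PGIncident m P then 1 else 0 with he
    have hsplit : ∀ P, w P = w' P + e P := by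
      intro P
      simp only [hw', he]
      split_ifs with h
      · have := hpos P h; omega
      · omega
    have hmeet : ∀ k, meet w k = meet w' k + meet e k := by
      intro k
      rw [← meet_add]
      exact Finset.sum_congr rfl fun P _ => hsplit P
    have hem : meet e m = Fintype.card F + 1 := by
      rw [← card_points_on m, Finset.card_eq_sum_ones]
      refine Finset.sum_congr rfl fun P hP => ?_
      have hP : PGIncident m P := by simpa using hP
      simp [he, hP]
    have hek : ∀ k, k ≠ m → meet e k = 1 := by
      intro k hk
      obtain ⟨P, h1, h2⟩ := exists_point m k
      rw [meet_supported e hk.symm h1 h2 (fun Q hQ => by simp [he, hQ])]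
      simp [he, h1]
    have hmod' : ∀ k, meet w' k ≡ n [MOD p] := by
      intro k
      by_cases hk : k = m
      · subst hk
        have := hmod k
        rw [hmeet, hem, ← add_assoc] at this
        have := Nat.ModEq.add_right_cancel' 1 this
        have h0 : Fintype.card F ≡ 0 [MOD p] := (Nat.modEq_zero_iff_dvd).2 hpq
        simpa using (Nat.ModEq.add_left (meet w' k) h0).symm.trans this
      · have := hmod k
        rw [hmeet, hek k hk] at this
        exact Nat.ModEq.add_right_cancel' 1 this
    have hsum' : ∑ P, w' P = n * (Fintype.card F + 1) := by
      have h1 : ∑ P, w P = ∑ P, w' P + ∑ P, e P := by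
        rw [← Finset.sum_add_distrib]
        exact Finset.sum_congr rfl fun P _ => hsplit P
      have h2 : ∑ P, e P = Fintype.card F + 1 := by
        rw [← card_points_on m, Finset.card_filter]
      rw [hw, h2] at h1
      linarith [Nat.succ_mul n (Fintype.card F + 1)]
    have hge' : ∀ k, n ≤ meet w' k := by
      intro k
      -- a number congruent to `n < p` modulo `p` is at least `n`
      have h1 : meet w' k % p = n := Eq.trans (hmod' k) (Nat.mod_eq_of_lt (by omega))
      rw [← h1]
      exact Nat.mod_le _ _
    obtain ⟨L, hL, hLw⟩ := ih (by omega) w' hsum' hge' hmod'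
    refine ⟨m ::ₘ L, by simp [hL], fun P => ?_⟩
    rw [Multiset.map_cons, Multiset.sum_cons, Multiset.count_add, ← hLw, count_pgLinePts,
      hsplit P, add_comm]

/-! ### Line weights modulo `p` -/

theorem eq_of_rep_eq_smul {l m : PGPoint F} {s : F} (hs : m.rep = s • l.rep) : m = l := by
  rw [← m.mk_rep, ← l.mk_rep, Projectivization.mk_eq_mk_iff']
  exact ⟨s, hs.symm⟩

/-- Let `w` be a weight function vanishing on `l` such that, outside a set of at most `p` points
of `l`, every line other than `l` through a point of `l` has weight exactly `n`. Then the weights of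
the lines other than `l` through a given point of `l` all agree modulo `p`. -/
theorem meet_modEq (p h n : ℕ) [Fact p.Prime] (hh : 1 < h) [Fintype F] [CharP F p]
    (hcard : Fintype.card F = p ^ h) (l : PGPoint F) (w : PGPoint F → ℕ)
    (hw : ∀ Q, PGIncident l Q → w Q = 0) (D : Finset (PGPoint F)) (hDp : D.card ≤ p)
    (hD : ∀ P, PGIncident l P → P ∉ D → ∀ m, l ≠ m → PGIncident m P → meet w m = n)
    {P m k : PGPoint F} (hlP : PGIncident l P) (hmP : PGIncident m P) (hkP : PGIncident k P)
    (hlm : l ≠ m) (hlk : l ≠ k) : meet w m ≡ meet w k [MOD p] := by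
  obtain ⟨v, hv⟩ : ∃ v : Fin 3 → F, v ⬝ᵥ P.rep ≠ 0 := by
    obtain ⟨i, hi⟩ := Function.ne_iff.1 P.rep_nonzero
    exact ⟨Pi.single i 1, by simpa using hi⟩
  rw [PGIncident_iff_dot] at hlP hmP
  -- no vector `m + t v + c l` is a multiple of `l`
  have hindep : ∀ t c s : F, m.rep + t • v + c • l.rep ≠ s • l.rep := by
    intro t c s heq
    have h1 := congrArg (· ⬝ᵥ P.rep) heq
    simp only [add_dotProduct, smul_dotProduct, hlP, hmP, smul_eq_mul, mul_zero, add_zero,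
      zero_add, mul_eq_zero, hv, or_false] at h1
    subst h1
    refine hlm (eq_of_rep_eq_smul (s := s - c) ?_).symm
    rw [sub_smul, ← heq]; simp
  have hne : ∀ t c : F, m.rep + t • v + c • l.rep ≠ 0 := by
    intro t c; simpa using hindep t c 0
  have hnel : ∀ t c : F, l ≠ Projectivization.mk F _ (hne t c) := by
    intro t c heq
    obtain ⟨s, hs⟩ := (Projectivization.mk_eq_mk_iff' _ _ _ _ _).1 (heq.symm.trans l.mk_rep.symm)
    exact hindep t c s hs.symm
  -- affine points are normalised so that their product with `l` is `1`; on `l` the quotients are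
  -- junk, but there `w` vanishes
  set a : PGPoint F → F := fun Q => (m.rep ⬝ᵥ Q.rep) / (l.rep ⬝ᵥ Q.rep) with ha
  set b : PGPoint F → F := fun Q => (v ⬝ᵥ Q.rep) / (l.rep ⬝ᵥ Q.rep) with hb
  have hcnt : ∀ t c : F, (∑ Q, if a Q + t * b Q + c = 0 then w Q else 0)
      = meet w (Projectivization.mk F _ (hne t c)) := by
    intro t c
    unfold meet
    rw [Finset.sum_filter]
    refine Finset.sum_congr rfl fun Q _ => ?_
    by_cases hQ : l.rep ⬝ᵥ Q.rep = 0
    · rw [hw Q hQ]; simp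
    · refine if_congr ?_ rfl rfl
      rw [PGIncident_mk, add_dotProduct, add_dotProduct, smul_dotProduct, smul_dotProduct]
      simp only [ha, hb, smul_eq_mul]
      rw [← mul_right_inj' hQ, mul_zero]
      have : (l.rep ⬝ᵥ Q.rep) * (m.rep ⬝ᵥ Q.rep / l.rep ⬝ᵥ Q.rep +
          t * (v ⬝ᵥ Q.rep / l.rep ⬝ᵥ Q.rep) + c) =
          m.rep ⬝ᵥ Q.rep + t * v ⬝ᵥ Q.rep + c * l.rep ⬝ᵥ Q.rep := by
        field_simp
      rw [this]
  set bad : Finset F := Finset.univ.filter fun t =>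
    ∃ R ∈ D, l.rep ⬝ᵥ R.rep = 0 ∧ (m.rep + t • v) ⬝ᵥ R.rep = 0 with hbaddef
  have hbad : bad.card ≤ p := by
    have h1 : ∀ t ∈ bad, ∃ R ∈ D, l.rep ⬝ᵥ R.rep = 0 ∧ (m.rep + t • v) ⬝ᵥ R.rep = 0 := by
      intro t ht
      exact (Finset.mem_filter.1 ht).2
    choose! f hfD hfl hfm using h1
    refine (Finset.card_le_card_of_injOn f hfD ?_).trans hDp
    intro t ht t' ht' heq
    by_contra htt
    have e1 := hfm t ht
    have e2 := hfm t' ht'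
    rw [← heq] at e2
    simp only [add_dotProduct, smul_dotProduct, smul_eq_mul] at e1 e2
    have e3 : (t - t') * (v ⬝ᵥ (f t).rep) = 0 := by linear_combination e1 - e2
    have e4 : v ⬝ᵥ (f t).rep = 0 := by
      rcases mul_eq_zero.1 e3 with h | h
      · exact absurd (sub_eq_zero.1 h) htt
      · exact h
    rw [e4, mul_zero, add_zero] at e1
    have : f t = P := (inter_eq hlm hlP hmP (f t)).1 ⟨e1, hfl t ht⟩
    rw [this] at e4
    exact hv e4
  have hgood : ∀ t ∉ bad, ∀ c, (∑ Q, if a Q + t * b Q + c = 0 then w Q else 0) = n := by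
    intro t ht c
    rw [hcnt]
    obtain ⟨R, hR1, hR2⟩ := exists_point l (Projectivization.mk F _ (hne t c))
    refine hD R hR1 ?_ _ (hnel t c) hR2
    intro hRD
    refine ht (Finset.mem_filter.2 ⟨Finset.mem_univ _, R, hRD, hR1, ?_⟩)
    rw [PGIncident_mk, add_dotProduct, smul_dotProduct, (PGIncident_iff_dot l R).1 hR1] at hR2
    simpa using hR2
  -- every line through `P` other than `l` has the form `m + c l`
  have hform : ∀ k, PGIncident k P → l ≠ k →
      ∃ c, k = Projectivization.mk F _ (hne 0 c) := by
    intro k hkP hlk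
    obtain ⟨Q, hQk, hQl⟩ := exists_off_point hlk
    rw [PGIncident_iff_dot] at hQl
    refine ⟨-a Q, (eq_or_eq_of_inc (P := P) (Q := Q) hkP hQk ?_ ?_).resolve_left ?_⟩
    · rw [PGIncident_mk]
      simp [add_dotProduct, smul_dotProduct, hlP, hmP]
    · rw [PGIncident_mk]
      simp only [add_dotProduct, smul_dotProduct, ha, smul_eq_mul]
      field_simp
      ring
    · rintro rfl
      exact hQl hlP
  obtain ⟨c, hc⟩ := hform m hmP hlm
  obtain ⟨c', hc'⟩ := hform k hkP hlk
  have := cnt_modEq p h n hh hcard w a b bad hbad hgood c c'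
  have h0 : ∀ c, (∑ Q, if a Q + c = 0 then w Q else 0)
      = meet w (Projectivization.mk F _ (hne 0 c)) := by
    intro c
    rw [← hcnt]
    simp
  rwa [h0, h0, ← hc, ← hc'] at this

theorem countP_eq_sum_count [Fintype F] (r : PGPoint F → Prop) [DecidablePred r]
    (M : Multiset (PGPoint F)) :
    Multiset.countP r M = ∑ P with r P, M.count P := by
  rw [Multiset.countP_eq_card_filter,
    ← Multiset.sum_count_eq_card (s := Finset.univ) (fun a _ => Finset.mem_univ a),
    Finset.sum_filter]
  exact Finset.sum_congr rfl fun P _ => Multiset.count_filter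

/-! ### Weights on and off the Rédei line

Throughout, `wA` is the affine part of the weight function `w`, that is, `w` set to zero on `l`. -/

section Redei

variable [Fintype F] {n : ℕ} {l : PGPoint F} {w wA : PGPoint F → ℕ}

theorem sum_lines_through {P : PGPoint F}
    (hA : ∀ Q, wA Q = if PGIncident l Q then 0 else w Q)
    (hsum : ∑ Q, wA Q = n * Fintype.card F) (hlP : PGIncident l P) :
    ∑ m with PGIncident m P ∧ m ≠ l, meet wA m = n * Fintype.card F := by
  have h1 := sum_meet wA P
  rw [hA P, if_pos hlP, mul_zero, add_zero, hsum] at h1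
  rw [← h1, ← Finset.filter_filter, Finset.filter_ne']
  refine Finset.sum_erase _ ?_
  refine Finset.sum_eq_zero fun Q hQ => ?_
  rw [hA, if_pos (by simpa using hQ)]

theorem card_lines_through_ne {P : PGPoint F} (hlP : PGIncident l P) :
    (Finset.univ.filter fun m => PGIncident m P ∧ m ≠ l).card = Fintype.card F := by
  rw [← Finset.filter_filter, Finset.filter_ne', Finset.card_erase_of_mem (by simpa using hlP),
    card_lines_through]
  rfl

theorem meet_eq_affine_add {P m : PGPoint F}
    (hA : ∀ Q, wA Q = if PGIncident l Q then 0 else w Q)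
    (hlP : PGIncident l P) (hmP : PGIncident m P) (hlm : l ≠ m) :
    meet w m = meet wA m + w P := by
  have h1 := meet_supported (fun Q => if PGIncident l Q then w Q else 0) hlm hlP hmP
    (fun Q hQ => if_neg hQ)
  simp only [if_pos hlP] at h1
  rw [← h1, ← meet_add]
  refine Finset.sum_congr rfl fun Q _ => ?_
  simp only [hA]
  split_ifs <;> simp

theorem sum_eq_affine_add (hA : ∀ Q, wA Q = if PGIncident l Q then 0 else w Q) :
    ∑ Q, w Q = ∑ Q, wA Q + meet w l := by
  unfold meet
  rw [Finset.sum_filter, ← Finset.sum_add_distrib]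
  refine Finset.sum_congr rfl fun Q _ => ?_
  rw [hA]
  split_ifs <;> simp

/-- Through a point of `l` of weight zero, every line other than `l` has weight exactly `n`. -/
theorem meet_eq_of_weight_zero {P m : PGPoint F}
    (hA : ∀ Q, wA Q = if PGIncident l Q then 0 else w Q)
    (hsum : ∑ Q, wA Q = n * Fintype.card F) (hblock : ∀ m, n ≤ meet w m)
    (hlP : PGIncident l P) (hP : w P = 0) (hlm : l ≠ m) (hmP : PGIncident m P) :
    meet wA m = n := by
  have hge : ∀ k, PGIncident k P ∧ k ≠ l → n ≤ meet wA k := by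
    rintro k ⟨h1, h2⟩
    have := hblock k
    rwa [meet_eq_affine_add hA hlP h1 h2.symm, hP, add_zero] at this
  have h1 := sum_lines_through hA hsum hlP
  have h2 : ∑ k with PGIncident k P ∧ k ≠ l, n = n * Fintype.card F := by
    rw [Finset.sum_const, card_lines_through_ne hlP, smul_eq_mul, mul_comm]
  exact ((Finset.sum_eq_sum_iff_of_le fun k hk => hge k (by simpa using hk)).1 (h2.trans h1.symm) m
    (by simp [hmP, hlm.symm])).symm

/-- If `P₀` is the only point of `l` of positive weight, every line through an affine point `Q`
other than `Q P₀` has weight `n`, so `Q P₀` has affine weight `q w(Q)`. All line weights are then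
congruent to `n` even modulo `q`. -/
theorem redei_single {P₀ : PGPoint F}
    (hA : ∀ Q, wA Q = if PGIncident l Q then 0 else w Q)
    (hsum : ∑ Q, wA Q = n * Fintype.card F) (hblock : ∀ m, n ≤ meet w m)
    (hmin : ∀ P, 0 < w P → ∃ m, PGIncident m P ∧ meet w m = n)
    (hn : n < Fintype.card F) (hlP₀ : PGIncident l P₀) (hP₀ : 0 < w P₀)
    (huniq : ∀ P, PGIncident l P → P ≠ P₀ → w P = 0) (m : PGPoint F) :
    meet w l = n ∧ meet w m ≡ n [MOD Fintype.card F] := by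
  have hl : meet w l = w P₀ := by
    refine Finset.sum_eq_single_of_mem P₀ (by simpa using hlP₀) fun Q hQ hne => ?_
    exact huniq Q (by simpa using hQ) hne
  have hthru : ∀ k, l ≠ k → PGIncident k P₀ → ∃ x, meet wA k = Fintype.card F * x := by
    intro k hlk hk
    obtain ⟨Q, hQk, hQl⟩ := exists_off_point hlk
    refine ⟨wA Q, ?_⟩
    have h1 := sum_meet wA Q
    have h2 : ∑ m ∈ (Finset.univ.filter fun m => PGIncident m Q).erase k, meet wA m
        = Fintype.card F * n := by
      rw [Finset.sum_congr rfl (g := fun _ => n), Finset.sum_const,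
        Finset.card_erase_of_mem (by simpa using hQk), card_lines_through]
      · rfl
      · intro m hm
        simp only [Finset.mem_erase, Finset.mem_filter, Finset.mem_univ, true_and] at hm
        have hlm : l ≠ m := by rintro rfl; exact hQl hm.2
        obtain ⟨R, hR1, hR2⟩ := exists_point l m
        refine meet_eq_of_weight_zero hA hsum hblock hR1 (huniq R hR1 ?_) hlm hR2
        rintro rfl
        rcases eq_or_eq_of_inc hR2 hm.2 hk hQk with h | h
        · exact hQl (h ▸ hR1)
        · exact hm.1 h
    rw [← Finset.add_sum_erase _ _ (show k ∈ Finset.univ.filter fun m => PGIncident m Q by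
      simpa using hQk), h2, hsum, mul_comm n] at h1
    omega
  have hw0 : w P₀ = n := by
    obtain ⟨k, hk, hkn⟩ := hmin P₀ hP₀
    by_cases hlk : l = k
    · rw [← hl, hlk, hkn]
    · obtain ⟨x, hx⟩ := hthru k hlk hk
      rw [meet_eq_affine_add hA hlP₀ hk hlk, hx] at hkn
      rcases Nat.eq_zero_or_pos x with h0 | h0
      · simpa [h0] using hkn
      · have := Nat.le_mul_of_pos_right (Fintype.card F) h0
        omega
  refine ⟨hl.trans hw0, ?_⟩
  by_cases hlm : l = m
  · rw [← hlm, hl, hw0]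
  · obtain ⟨R, hR1, hR2⟩ := exists_point l m
    rw [meet_eq_affine_add hA hR1 hR2 hlm]
    by_cases hR : R = P₀
    · subst hR
      obtain ⟨x, hx⟩ := hthru m hlm hR2
      rw [hx, hw0]
      simp [Nat.ModEq]
    · rw [meet_eq_of_weight_zero hA hsum hblock hR1 (huniq R hR1 hR) hlm hR2, huniq R hR1 hR]
      rfl

/-- If, modulo `p > n`, the affine weight of a line other than `l` depends only on its point on `l`,
then all line weights are `n` modulo `p`, and `l` has weight `n`.

The affine weights of the lines through `P ∈ l` have least value `n - d P` with
`0 ≤ d P ≤ w P`. Counting along the lines through an affine point gives `∑ d P ≡ n` modulo `p`; the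
bound on the number of points forces `∑ d P = n`, and then minimality gives `w = d` on `l`. -/
theorem redei_modEq {p : ℕ} (hpq : p ∣ Fintype.card F) (hn0 : 0 < n) (hnp : n < p)
    (hA : ∀ Q, wA Q = if PGIncident l Q then 0 else w Q)
    (hsum : ∑ Q, wA Q = n * Fintype.card F) (hblock : ∀ m, n ≤ meet w m)
    (hmin : ∀ P, 0 < w P → ∃ m, PGIncident m P ∧ meet w m = n)
    (hfew : n * (Finset.univ.filter fun P => PGIncident l P ∧ 0 < w P).card ≤ p)
    (hdir : ∀ P m k, PGIncident l P → PGIncident m P → PGIncident k P → l ≠ m → l ≠ k →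
      meet wA m ≡ meet wA k [MOD p])
    (m : PGPoint F) : meet w l = n ∧ meet w m ≡ n [MOD p] := by
  have hq := Fintype.card_pos (α := F)
  -- a line `k₀` of at most average affine weight attains the least residue, as `n < p`
  have he : ∀ P, PGIncident l P → ∃ d, d ≤ w P ∧ d ≤ n ∧
      ∀ k, l ≠ k → PGIncident k P → n ≤ meet wA k + d ∧ meet wA k + d ≡ n [MOD p] := by
    intro P hlP
    have hS := sum_lines_through hA hsum hlP
    obtain ⟨k₀, hk₀, hle⟩ : ∃ k ∈ Finset.univ.filter fun m => PGIncident m P ∧ m ≠ l,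
        meet wA k ≤ n := by
      refine Finset.exists_le_of_sum_le ?_ ?_
      · rw [← Finset.card_pos, card_lines_through_ne hlP]; exact hq
      · rw [hS, Finset.sum_const, card_lines_through_ne hlP, smul_eq_mul, mul_comm]
    simp only [Finset.mem_filter, Finset.mem_univ, true_and] at hk₀
    have hb := hblock k₀
    rw [meet_eq_affine_add hA hlP hk₀.1 hk₀.2.symm] at hb
    refine ⟨n - meet wA k₀, by omega, by omega, fun k hlk hk => ?_⟩
    have hmod := hdir P k k₀ hlP hk hk₀.1 hlk hk₀.2.symm
    have hk₀k : meet wA k₀ ≤ meet wA k := by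
      have h1 : meet wA k % p = meet wA k₀ :=
        Eq.trans hmod (Nat.mod_eq_of_lt (by omega))
      rw [← h1]
      exact Nat.mod_le _ _
    refine ⟨by omega, ?_⟩
    have := hmod.add_right (n - meet wA k₀)
    rwa [Nat.add_sub_cancel' hle] at this
  choose! d₀ hdw hdn hdm using he
  set d : PGPoint F → ℕ := fun P => if PGIncident l P then d₀ P else 0 with hd
  have hdl : ∀ P, PGIncident l P → d P = d₀ P := fun P hP => if_pos hP
  have hd0 : ∀ P, ¬ PGIncident l P → d P = 0 := fun P hP => if_neg hP
  have hmeet : ∀ k, l ≠ k → meet (fun Q => wA Q + d Q) k ≡ n [MOD p] := by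
    intro k hlk
    obtain ⟨R, hR1, hR2⟩ := exists_point l k
    rw [meet_add, meet_supported d hlk hR1 hR2 hd0, hdl R hR1]
    exact (hdm R hR1 k hlk hR2).2
  -- counting along the lines through an affine point
  have hdmod : ∑ Q, d Q ≡ n [MOD p] := by
    obtain ⟨k, hk⟩ : ∃ k, l ≠ k := by
      obtain ⟨P, hP, -⟩ := exists_point l l
      have h1 := card_lines_through_ne hP
      obtain ⟨k, hk⟩ := Finset.card_pos.1 (hq.trans_eq h1.symm)
      exact ⟨k, by simpa [eq_comm] using (Finset.mem_filter.1 hk).2.2⟩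
    obtain ⟨Q, -, hQ⟩ := exists_off_point hk
    have h1 := sum_meet (fun Q => wA Q + d Q) Q
    have h2 : ∑ m with PGIncident m Q, meet (fun Q => wA Q + d Q) m
        ≡ ∑ m with PGIncident m Q, n [MOD p] := by
      refine Nat.ModEq.sum fun m hm => hmeet m ?_
      rintro rfl
      exact hQ (by simpa using hm)
    rw [h1, Finset.sum_add_distrib, hsum, Finset.sum_const, card_lines_through, smul_eq_mul] at h2
    have h0 : Fintype.card F ≡ 0 [MOD p] := (Nat.modEq_zero_iff_dvd).2 hpq
    have h3 := ((h0.mul_left n).add_right (∑ Q, d Q)).add (h0.mul_right (wA Q + d Q))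
    have h4 := (h0.add_right 1).mul_right n
    simpa using h3.symm.trans (h2.trans h4)
  have hdle : ∑ Q, d Q ≤ p := by
    refine le_trans ?_ hfew
    rw [mul_comm, ← smul_eq_mul, ← Finset.sum_const, Finset.sum_filter]
    refine Finset.sum_le_sum fun Q _ => ?_
    split_ifs with h
    · rw [hdl Q h.1]; exact hdn Q h.1
    · by_cases hQ : PGIncident l Q
      · have := hdw Q hQ
        rw [hdl Q hQ]
        have : ¬ 0 < w Q := fun h' => h ⟨hQ, h'⟩
        omega
      · rw [hd0 Q hQ]
  have hdn' : ∑ Q, d Q = n := by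
    have h1 : (∑ Q, d Q) % p = n := Eq.trans hdmod (Nat.mod_eq_of_lt hnp)
    rcases hdle.lt_or_eq with h | h
    · rwa [Nat.mod_eq_of_lt h] at h1
    · rw [h, Nat.mod_self] at h1; omega
  have hdl' : meet d l = n := by
    rw [← hdn']
    unfold meet
    rw [Finset.sum_filter]
    refine Finset.sum_congr rfl fun Q _ => ?_
    split_ifs with h
    · rfl
    · rw [hd0 Q h]
  -- minimality leaves no room for larger weights on `l`
  have hwd : ∀ P, PGIncident l P → w P = d P := by
    intro P hP
    rcases Nat.eq_zero_or_pos (w P) with h0 | h0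
    · have := hdw P hP
      rw [hdl P hP]; omega
    obtain ⟨k, hk, hkn⟩ := hmin P h0
    have hdwP := hdw P hP
    by_cases hlk : l = k
    · subst hlk
      have hle : ∀ Q ∈ Finset.univ.filter (fun Q => PGIncident l Q), d Q ≤ w Q := by
        intro Q hQ
        have hQ : PGIncident l Q := by simpa using hQ
        rw [hdl Q hQ]; exact hdw Q hQ
      exact ((Finset.sum_eq_sum_iff_of_le hle).1 (hdl'.trans hkn.symm) P (by simpa using hP)).symm
    · have h1 := (hdm P hP k hlk hk).1
      rw [meet_eq_affine_add hA hP hk hlk] at hkn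
      rw [hdl P hP]; omega
  have hl : meet w l = n := by
    rw [← hdl']
    exact Finset.sum_congr rfl fun Q hQ => hwd Q (by simpa using hQ)
  refine ⟨hl, ?_⟩
  by_cases hlm : l = m
  · rw [← hlm, hl]
  · obtain ⟨R, hR1, hR2⟩ := exists_point l m
    rw [meet_eq_affine_add hA hR1 hR2 hlm, hwd R hR1, hdl R hR1]
    exact (hdm R hR1 m hlm hR2).2

end Redei

theorem stmt9 (p h n : ℕ) [Fact p.Prime] (hh : 1 < h)
    (F : Type) [Field F] [Fintype F] [CharP F p] (hcard : Fintype.card F = p ^ h)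
    (M : Multiset (PGPoint F)) (hn : n < Fintype.card F)
    (hblock : ∀ l : PGPoint F, n ≤ lineMeets M l)
    (hmin : ∀ P ∈ M, ∃ l : PGPoint F, PGIncident l P ∧ lineMeets M l = n)
    (l : PGPoint F)
    (hredei : Multiset.countP (fun P => ¬ PGIncident l P) M = n * Fintype.card F)
    (hfew : n * (M.toFinset.filter (fun P => PGIncident l P)).card ≤ p) :
    ∃ L : Multiset (PGPoint F), Multiset.card L = n ∧
      M = (L.map pgLinePts).sum := by
  have hp : p.Prime := Fact.out
  set w : PGPoint F → ℕ := fun P => M.count P with hw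
  set wA : PGPoint F → ℕ := fun P => if PGIncident l P then 0 else w P with hwA
  have hA : ∀ Q, wA Q = if PGIncident l Q then 0 else w Q := fun _ => rfl
  have hmeet : ∀ m, lineMeets M m = meet w m := fun m => countP_eq_sum_count _ M
  have hmem : ∀ P, P ∈ M ↔ 0 < w P := fun P => Multiset.count_pos.symm
  have hsum : ∑ Q, wA Q = n * Fintype.card F := by
    rw [← hredei, countP_eq_sum_count, Finset.sum_filter]
    refine Finset.sum_congr rfl fun Q _ => ?_
    rw [hA]
    split_ifs <;> rfl
  simp only [hmeet] at hblock hmin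
  simp only [hmem] at hmin
  have hpq : p ∣ Fintype.card F := hcard ▸ dvd_pow_self p (by omega)
  set D : Finset (PGPoint F) := Finset.univ.filter fun P => PGIncident l P ∧ 0 < w P with hD
  have hDeq : M.toFinset.filter (fun P => PGIncident l P) = D := by
    ext P
    simp [hD, hw, Multiset.count_pos, and_comm]
  rw [hDeq] at hfew
  rcases Nat.eq_zero_or_pos n with hn0 | hn0
  · subst hn0
    refine ⟨0, rfl, ?_⟩
    rw [Multiset.map_zero, Multiset.sum_zero, Multiset.eq_zero_iff_forall_notMem]
    intro P hP
    obtain ⟨m, hmP, hm⟩ := hmin P ((hmem P).1 hP)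
    have h1 : w P ≤ meet w m :=
      Finset.single_le_sum (f := w) (fun _ _ => Nat.zero_le _) (by simpa using hmP)
    have h2 := (hmem P).1 hP
    omega
  obtain ⟨P₀, hlP₀, hP₀⟩ : ∃ P, PGIncident l P ∧ 0 < w P := by
    obtain ⟨P, hP, hP0⟩ := Finset.exists_ne_zero_of_sum_ne_zero (hn0.trans_le (hblock l)).ne'
    exact ⟨P, by simpa using hP, Nat.pos_of_ne_zero hP0⟩
  have hP₀D : P₀ ∈ D := by simp [hD, hlP₀, hP₀]
  have hDpos : 0 < D.card := Finset.card_pos.2 ⟨P₀, hP₀D⟩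
  have hnp : n ≤ p := (Nat.le_mul_of_pos_right n hDpos).trans hfew
  have key : ∀ m, meet w l = n ∧ meet w m ≡ n [MOD p] := by
    intro m
    rcases hnp.lt_or_eq with hlt | heq
    · refine redei_modEq hpq hn0 hlt hA hsum hblock hmin hfew ?_ m
      intro P m k h1 h2 h3 h4 h5
      refine meet_modEq p h n hh hcard l wA (fun Q hQ => if_pos hQ) D
        ((Nat.le_mul_of_pos_left _ hn0).trans hfew) ?_ h1 h2 h3 h4 h5
      intro R hR hRD m hlm hmR
      refine meet_eq_of_weight_zero hA hsum hblock hR ?_ hlm hmR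
      by_contra hne
      exact hRD (by simp [hD, hR, Nat.pos_of_ne_zero hne])
    · -- if `n = p` then `l` carries a single point of `M`
      have hD1 : D.card ≤ 1 := by
        rw [heq] at hfew
        exact Nat.le_of_mul_le_mul_left (by omega) hp.pos
      obtain ⟨h1, h2⟩ := redei_single hA hsum hblock hmin hn hlP₀ hP₀ (fun P hP hne => by
        by_contra h0
        exact hne (Finset.card_le_one.1 hD1 P (by simp [hD, hP, Nat.pos_of_ne_zero h0]) P₀ hP₀D)) m
      exact ⟨h1, h2.of_dvd hpq⟩
  obtain ⟨L, hL, hLw⟩ := sum_of_lines p hpq n hnp w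
    (by rw [sum_eq_affine_add hA, hsum, (key l).1]; ring) hblock (fun m => (key m).2)
  refine ⟨L, hL, Multiset.ext.2 hLw⟩

end
end
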